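/- For every Ω ∈ 𝔖₂ and every z ∈ ℂ², the following three quadratic theta relations hold (equations (E4)–(E6)): A1²·X1² − A3²·X2² − A6²·X3² + A10²·X4² = 0, A2²·X1² − A4²·X2² − A9²·X3² + A10²·X5² = 0, and A5²·X1² − A8²·X2² − A7²·X3² + A10²·X6² = 0. -/

import Mathlib

/-!
Substituting `p = (n + m) / 2`, `q = (n - m) / 2` in the double series for the square of a theta
function with half-integral characteristics gives the duplication formula `theta2_sq`
`θ[l/2; k/2](u, Ω)² = ∑_c (-1) ^ ((c + l)·k) θ[(c + l)/2; 0](2u, 2Ω) θ[c/2; 0](0, 2Ω)`,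
with `c` running over `{0, 1}²`, which records the common parity of `n - m` and `n + m`. Absolute
convergence (`summable_thetaTerm`) justifies the rearrangement. The characteristic `(c + l)/2`
matters only modulo `1` (`T_add_two_left`, `T_add_two_right`), so all `Aᵢ²` are quadratic forms in
the four constants `θ[c/2; 0](0, 2Ω)`, and all `Xᵢ²` are bilinear in these constants and the four
values `θ[c/2; 0](4z, 2Ω)`. After this substitution each of the three relations is a polynomial
identity.
-/

open Complex

/-- Genus-2 theta function with characteristics. -/
noncomputable def theta2 (a b : Fin 2 → ℝ) (z : Fin 2 → ℂ)
    (Ω : Matrix (Fin 2) (Fin 2) ℂ) : ℂ :=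
  ∑' n : Fin 2 → ℤ,
    Complex.exp ((Real.pi : ℂ) * I *
        (∑ i, ∑ j, ((n i : ℂ) + (a i : ℂ)) * Ω i j * ((n j : ℂ) + (a j : ℂ)))
      + 2 * (Real.pi : ℂ) * I * (∑ i, ((n i : ℂ) + (a i : ℂ)) * (z i + (b i : ℂ))))

/-- The Siegel upper half space of degree 2. -/
def IsSiegel (Ω : Matrix (Fin 2) (Fin 2) ℂ) : Prop :=
  Ω.IsSymm ∧ (Matrix.of fun i j => (Ω i j).im).PosDef

noncomputable def A₁ (Ω : Matrix (Fin 2) (Fin 2) ℂ) : ℂ := theta2 ![0, 0] ![0, 0] 0 Ω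
noncomputable def A₂ (Ω : Matrix (Fin 2) (Fin 2) ℂ) : ℂ := theta2 ![0, 0] ![0, 1/2] 0 Ω
noncomputable def A₃ (Ω : Matrix (Fin 2) (Fin 2) ℂ) : ℂ := theta2 ![0, 0] ![1/2, 0] 0 Ω
noncomputable def A₄ (Ω : Matrix (Fin 2) (Fin 2) ℂ) : ℂ := theta2 ![0, 0] ![1/2, 1/2] 0 Ω
noncomputable def A₅ (Ω : Matrix (Fin 2) (Fin 2) ℂ) : ℂ := theta2 ![0, 1/2] ![0, 0] 0 Ω
noncomputable def A₆ (Ω : Matrix (Fin 2) (Fin 2) ℂ) : ℂ := theta2 ![1/2, 0] ![0, 0] 0 Ω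
noncomputable def A₇ (Ω : Matrix (Fin 2) (Fin 2) ℂ) : ℂ := theta2 ![1/2, 1/2] ![0, 0] 0 Ω
noncomputable def A₈ (Ω : Matrix (Fin 2) (Fin 2) ℂ) : ℂ := theta2 ![0, 1/2] ![1/2, 0] 0 Ω
noncomputable def A₉ (Ω : Matrix (Fin 2) (Fin 2) ℂ) : ℂ := theta2 ![1/2, 0] ![0, 1/2] 0 Ω
noncomputable def A₁₀ (Ω : Matrix (Fin 2) (Fin 2) ℂ) : ℂ := theta2 ![1/2, 1/2] ![1/2, 1/2] 0 Ω

noncomputable def X₁ (z : Fin 2 → ℂ) (Ω : Matrix (Fin 2) (Fin 2) ℂ) : ℂ :=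
  theta2 ![0, 1/2] ![0, 1/2] (fun i => 2 * z i) Ω
noncomputable def X₂ (z : Fin 2 → ℂ) (Ω : Matrix (Fin 2) (Fin 2) ℂ) : ℂ :=
  theta2 ![0, 1/2] ![1/2, 1/2] (fun i => 2 * z i) Ω
noncomputable def X₃ (z : Fin 2 → ℂ) (Ω : Matrix (Fin 2) (Fin 2) ℂ) : ℂ :=
  theta2 ![1/2, 1/2] ![0, 1/2] (fun i => 2 * z i) Ω
noncomputable def X₄ (z : Fin 2 → ℂ) (Ω : Matrix (Fin 2) (Fin 2) ℂ) : ℂ :=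
  theta2 ![1/2, 0] ![1/2, 0] (fun i => 2 * z i) Ω
noncomputable def X₅ (z : Fin 2 → ℂ) (Ω : Matrix (Fin 2) (Fin 2) ℂ) : ℂ :=
  theta2 ![1/2, 0] ![1/2, 1/2] (fun i => 2 * z i) Ω
noncomputable def X₆ (z : Fin 2 → ℂ) (Ω : Matrix (Fin 2) (Fin 2) ℂ) : ℂ :=
  theta2 ![1/2, 1/2] ![1/2, 0] (fun i => 2 * z i) Ω


/-- The summand `exp (πi xᵀΩx + 2πi x·w)` of the theta series, at a real vector `x`, which is
embedded in `ℂ²`. -/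
noncomputable def thetaTerm (Ω : Matrix (Fin 2) (Fin 2) ℂ) (w : Fin 2 → ℂ) (x : Fin 2 → ℝ) : ℂ :=
  Complex.exp ((Real.pi : ℂ) * I * (∑ i, ∑ j, (x i : ℂ) * Ω i j * (x j : ℂ))
    + 2 * (Real.pi : ℂ) * I * (∑ i, (x i : ℂ) * w i))

lemma theta2_eq_tsum (a b : Fin 2 → ℝ) (z : Fin 2 → ℂ) (Ω : Matrix (Fin 2) (Fin 2) ℂ) :
    theta2 a b z Ω = ∑' n : Fin 2 → ℤ, thetaTerm Ω (fun i => z i + b i) (fun i => n i + a i) := by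
  simp [theta2, thetaTerm]

/-- A positive definite binary form dominates a positive multiple of `x² + y²`; the multiple used
is `det / trace`, which lies below the smaller eigenvalue. -/
lemma exists_pos_le_form {p q r : ℝ} (hp : 0 < p) (hdet : 0 < p * r - q ^ 2) :
    ∃ t : ℝ, 0 < t ∧ ∀ x y : ℝ, t * (x ^ 2 + y ^ 2) ≤ p * x ^ 2 + 2 * q * x * y + r * y ^ 2 := by
  have hr : 0 < r := by
    by_contra h
    nlinarith [sq_nonneg q]
  have hs : 0 < p + r := by positivity
  refine ⟨(p * r - q ^ 2) / (p + r), by positivity, fun x y => ?_⟩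
  rw [div_mul_eq_mul_div, div_le_iff₀ hs]
  -- The difference is the squared norm of `Y (x, y)`, by the theorem of Cayley and Hamilton.
  nlinarith [sq_nonneg (p * x + q * y), sq_nonneg (q * x + r * y)]

lemma summable_thetaTerm {Ω : Matrix (Fin 2) (Fin 2) ℂ} (h00 : 0 < (Ω 0 0).im)
    (hsymm : Ω 1 0 = Ω 0 1) (hdet : 0 < (Ω 0 0).im * (Ω 1 1).im - (Ω 0 1).im ^ 2)
    (w : Fin 2 → ℂ) (a : Fin 2 → ℝ) :
    Summable fun n : Fin 2 → ℤ => ‖thetaTerm Ω w (fun i => n i + a i)‖ := by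
  obtain ⟨t, ht, hle⟩ := exists_pos_le_form h00 hdet
  have h1 (v : ℝ) : Summable fun n : ℤ => ‖jacobiTheta₂_term n (v * I) (t * I)‖ :=
    ((summable_jacobiTheta₂_term_iff _ _).2 (by simpa using ht)).norm
  -- In `log ‖thetaTerm Ω w (n + a)‖`, the linear part in `n` is `-2π (n₀ v0 + n₁ v1)`, and the
  -- constant part is `log C`.
  set v0 : ℝ := (Ω 0 0).im * a 0 + (Ω 0 1).im * a 1 + (w 0).im with hv0
  set v1 : ℝ := (Ω 0 1).im * a 0 + (Ω 1 1).im * a 1 + (w 1).im with hv1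
  set C : ℝ := Real.exp (-Real.pi * ((Ω 0 0).im * a 0 ^ 2 + 2 * (Ω 0 1).im * a 0 * a 1
    + (Ω 1 1).im * a 1 ^ 2) - 2 * Real.pi * (a 0 * (w 0).im + a 1 * (w 1).im)) with hC
  have h2 := ((h1 v0).mul_of_nonneg (h1 v1) (fun _ => norm_nonneg _)
    (fun _ => norm_nonneg _)).mul_left C
  have h3 := (finTwoArrowEquiv ℤ).summable_iff.2 h2
  refine Summable.of_nonneg_of_le (fun _ => norm_nonneg _) (fun n => ?_) h3
  simp only [Function.comp_apply, finTwoArrowEquiv_apply, norm_jacobiTheta₂_term, hC,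
    ← Real.exp_add, thetaTerm, Complex.norm_exp]
  rw [Real.exp_le_exp]
  have := mul_le_mul_of_nonneg_left (hle (n 0) (n 1)) Real.pi_pos.le
  simp [Fin.sum_univ_two, hsymm]
  nlinarith

/-- Pairs of integer vectors `(n, m)` correspond to triples `(c, p, q)` with `c ∈ {0, 1}²` by
`n = p + q + c`, `m = p - q`. -/
noncomputable def parityEquiv :
    (Fin 2 × Fin 2) × ((Fin 2 → ℤ) × (Fin 2 → ℤ)) ≃ (Fin 2 → ℤ) × (Fin 2 → ℤ) :=
  Equiv.ofBijective
    (fun x => (![x.2.1 0 + x.2.2 0 + (x.1.1 : ℕ), x.2.1 1 + x.2.2 1 + (x.1.2 : ℕ)],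
      ![x.2.1 0 - x.2.2 0, x.2.1 1 - x.2.2 1])) (by
    constructor
    · rintro ⟨⟨c, d⟩, p, q⟩ ⟨⟨c', d'⟩, p', q'⟩ h
      simp only [Prod.mk.injEq, funext_iff, Fin.forall_fin_two, Matrix.cons_val_zero,
        Matrix.cons_val_one] at h
      obtain ⟨⟨h1, h2⟩, h3, h4⟩ := h
      have := c.isLt; have := c'.isLt; have := d.isLt; have := d'.isLt
      simp only [Prod.mk.injEq, funext_iff, Fin.forall_fin_two, Fin.ext_iff]
      omega
    · rintro ⟨n, m⟩
      refine ⟨((⟨((n 0 - m 0) % 2).toNat, by omega⟩, ⟨((n 1 - m 1) % 2).toNat, by omega⟩),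
        ![m 0 + (n 0 - m 0) / 2, m 1 + (n 1 - m 1) / 2],
        ![(n 0 - m 0) / 2, (n 1 - m 1) / 2]), ?_⟩
      simp only [Prod.mk.injEq, funext_iff, Fin.forall_fin_two, Matrix.cons_val_zero,
        Matrix.cons_val_one]
      omega)

/-- The theta function `θ[i/2, j/2; 0, 0](w, 2Ω)`. -/
noncomputable def T (Ω : Matrix (Fin 2) (Fin 2) ℂ) (w : Fin 2 → ℂ) (i j : ℕ) : ℂ :=
  ∑' n : Fin 2 → ℤ, thetaTerm ((2 : ℂ) • Ω) w (fun k => n k + ![(i : ℝ) / 2, (j : ℝ) / 2] k)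

@[simp]
lemma parityEquiv_apply (c : Fin 2 × Fin 2) (p q : Fin 2 → ℤ) :
    parityEquiv (c, p, q) =
      (![p 0 + q 0 + (c.1 : ℕ), p 1 + q 1 + (c.2 : ℕ)], ![p 0 - q 0, p 1 - q 1]) := rfl

lemma T_add_two_left (Ω : Matrix (Fin 2) (Fin 2) ℂ) (w : Fin 2 → ℂ) (i j : ℕ) :
    T Ω w (i + 2) j = T Ω w i j := by
  unfold T
  rw [← (Equiv.addRight (![1, 0] : Fin 2 → ℤ)).tsum_eq
    (fun n => thetaTerm ((2 : ℂ) • Ω) w (fun k => n k + ![(i : ℝ) / 2, (j : ℝ) / 2] k))]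
  refine tsum_congr fun n => congrArg _ ?_
  ext k
  fin_cases k <;> simp
  ring

lemma T_add_two_right (Ω : Matrix (Fin 2) (Fin 2) ℂ) (w : Fin 2 → ℂ) (i j : ℕ) :
    T Ω w i (j + 2) = T Ω w i j := by
  unfold T
  rw [← (Equiv.addRight (![0, 1] : Fin 2 → ℤ)).tsum_eq
    (fun n => thetaTerm ((2 : ℂ) • Ω) w (fun k => n k + ![(i : ℝ) / 2, (j : ℝ) / 2] k))]
  refine tsum_congr fun n => congrArg _ ?_
  ext k
  fin_cases k <;> simp
  ring

/-- The product of two terms of the theta series, in the coordinates of `parityEquiv`. -/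
lemma thetaTerm_mul_thetaTerm {Ω : Matrix (Fin 2) (Fin 2) ℂ} (u : Fin 2 → ℂ) (l0 l1 k0 k1 : ℕ)
    (c : Fin 2 × Fin 2) (p q : Fin 2 → ℤ) :
    thetaTerm Ω (fun i => u i + (![(k0 : ℝ) / 2, (k1 : ℝ) / 2] i : ℝ))
        (fun i => (parityEquiv (c, p, q)).1 i + ![(l0 : ℝ) / 2, (l1 : ℝ) / 2] i) *
      thetaTerm Ω (fun i => u i + (![(k0 : ℝ) / 2, (k1 : ℝ) / 2] i : ℝ))
        (fun i => (parityEquiv (c, p, q)).2 i + ![(l0 : ℝ) / 2, (l1 : ℝ) / 2] i) =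
    (-1) ^ ((c.1 + l0) * k0 + (c.2 + l1) * k1 : ℕ) *
      (thetaTerm ((2 : ℂ) • Ω) (fun i => 2 * u i)
          (fun k => p k + ![((c.1 + l0 : ℕ) : ℝ) / 2, ((c.2 + l1 : ℕ) : ℝ) / 2] k) *
        thetaTerm ((2 : ℂ) • Ω) 0
          (fun k => q k + ![((c.1 : ℕ) : ℝ) / 2, ((c.2 : ℕ) : ℝ) / 2] k)) := by
  rw [← Complex.exp_pi_mul_I, ← Complex.exp_nat_mul]
  simp only [thetaTerm, ← Complex.exp_add]
  rw [Complex.exp_eq_exp_iff_exists_int]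
  refine ⟨p 0 * k0 + p 1 * k1, ?_⟩
  simp [Fin.sum_univ_two]
  ring

/-- The duplication formula: the square of a theta function with half-integral characteristics is
bilinear in second-order theta functions. -/
lemma theta2_sq {Ω : Matrix (Fin 2) (Fin 2) ℂ} (hΩ : IsSiegel Ω) (u : Fin 2 → ℂ)
    (l0 l1 k0 k1 : ℕ) :
    theta2 ![(l0 : ℝ) / 2, (l1 : ℝ) / 2] ![(k0 : ℝ) / 2, (k1 : ℝ) / 2] u Ω ^ 2 =
      ∑ c : Fin 2 × Fin 2, (-1) ^ ((c.1 + l0) * k0 + (c.2 + l1) * k1 : ℕ) *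
        (T Ω (fun i => 2 * u i) (c.1 + l0) (c.2 + l1) * T Ω 0 c.1 c.2) := by
  have hsymm : Ω 1 0 = Ω 0 1 := hΩ.1.apply 0 1
  have h00 : 0 < (Ω 0 0).im := by simpa using hΩ.2.diag_pos (i := 0)
  have hdet : 0 < (Ω 0 0).im * (Ω 1 1).im - (Ω 0 1).im ^ 2 := by
    have := hΩ.2.det_pos
    rw [Matrix.det_fin_two] at this
    simpa [hsymm, sq] using this
  have hs := summable_thetaTerm h00 hsymm hdet
  have hs2 := summable_thetaTerm (Ω := (2 : ℂ) • Ω) (by simpa using h00) (by simp [hsymm])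
    (by simp; nlinarith)
  rw [sq, theta2_eq_tsum, tsum_mul_tsum_of_summable_norm (hs _ _) (hs _ _),
    ← parityEquiv.tsum_eq]
  have hprod := parityEquiv.summable_iff.2 (summable_mul_of_summable_norm
    (hs (fun i => u i + (![(k0 : ℝ) / 2, (k1 : ℝ) / 2] i : ℝ)) ![(l0 : ℝ) / 2, (l1 : ℝ) / 2])
    (hs (fun i => u i + (![(k0 : ℝ) / 2, (k1 : ℝ) / 2] i : ℝ)) ![(l0 : ℝ) / 2, (l1 : ℝ) / 2]))
  refine (Summable.tsum_prod hprod).trans ?_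
  rw [tsum_fintype]
  refine Finset.sum_congr rfl fun c _ => ?_
  unfold T
  rw [tsum_mul_tsum_of_summable_norm (hs2 _ _) (hs2 _ _), ← tsum_mul_left]
  exact tsum_congr fun x => thetaTerm_mul_thetaTerm u l0 l1 k0 k1 c x.1 x.2

theorem theta_relations_E4_E6
    (Ω : Matrix (Fin 2) (Fin 2) ℂ) (hΩ : IsSiegel Ω) (z : Fin 2 → ℂ) :
    (A₁ Ω ^ 2 * X₁ z Ω ^ 2 - A₃ Ω ^ 2 * X₂ z Ω ^ 2 - A₆ Ω ^ 2 * X₃ z Ω ^ 2 + A₁₀ Ω ^ 2 * X₄ z Ω ^ 2 = 0) ∧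
    (A₂ Ω ^ 2 * X₁ z Ω ^ 2 - A₄ Ω ^ 2 * X₂ z Ω ^ 2 - A₉ Ω ^ 2 * X₃ z Ω ^ 2 + A₁₀ Ω ^ 2 * X₅ z Ω ^ 2 = 0) ∧
    (A₅ Ω ^ 2 * X₁ z Ω ^ 2 - A₈ Ω ^ 2 * X₂ z Ω ^ 2 - A₇ Ω ^ 2 * X₃ z Ω ^ 2 + A₁₀ Ω ^ 2 * X₆ z Ω ^ 2 = 0) := by
  have key := fun (u : Fin 2 → ℂ) (l0 l1 k0 k1 : ℕ) => theta2_sq hΩ u l0 l1 k0 k1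
  simp only [Fintype.sum_prod_type, Fin.sum_univ_two] at key
  have hl (w : Fin 2 → ℂ) (j : ℕ) : T Ω w 2 j = T Ω w 0 j := T_add_two_left Ω w 0 j
  have hr (w : Fin 2 → ℂ) (i : ℕ) : T Ω w i 2 = T Ω w i 0 := T_add_two_right Ω w i 0
  have h0 : (fun i => 2 * (0 : Fin 2 → ℂ) i) = 0 := by ext; simp
  have a1 := key 0 0 0 0 0
  have a2 := key 0 0 0 0 1
  have a3 := key 0 0 0 1 0
  have a4 := key 0 0 0 1 1
  have a5 := key 0 0 1 0 0
  have a6 := key 0 1 0 0 0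
  have a7 := key 0 1 1 0 0
  have a8 := key 0 0 1 1 0
  have a9 := key 0 1 0 0 1
  have a10 := key 0 1 1 1 1
  have x1 := key (fun i => 2 * z i) 0 1 0 1
  have x2 := key (fun i => 2 * z i) 0 1 1 1
  have x3 := key (fun i => 2 * z i) 1 1 0 1
  have x4 := key (fun i => 2 * z i) 1 0 1 0
  have x5 := key (fun i => 2 * z i) 1 0 1 1
  have x6 := key (fun i => 2 * z i) 1 1 1 0
  simp only [h0, Fin.val_zero, Fin.val_one, Nat.cast_zero, Nat.cast_one, zero_div, zero_add,
    add_zero, Nat.reduceAdd, hl, hr] at a1 a2 a3 a4 a5 a6 a7 a8 a9 a10 x1 x2 x3 x4 x5 x6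
  simp only [A₁, A₂, A₃, A₄, A₅, A₆, A₇, A₈, A₉, A₁₀, X₁, X₂, X₃, X₄, X₅, X₆,
    a1, a2, a3, a4, a5, a6, a7, a8, a9, a10, x1, x2, x3, x4, x5, x6]
  refine ⟨?_, ?_, ?_⟩ <;> ring
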